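/- Let (X_n, p_{n+1}) be a tower of fibrations of pointed spaces with a chosen basepoint of lim_n X_n, let k ≥ 0, and let α, ᾱ : I^k → lim_n X_n be maps sending ∂I^k to the basepoint whose classes lie in the kernel of P : π_k(lim_n X_n) → lim_n π_k X_n. If α and ᾱ are homotopic relative to ∂I^k (so [α] = [ᾱ] in π_k(lim_n X_n)), then φ(α) = φ(ᾱ) in lim¹_n π_{k+1}X_n; hence φ induces a well-defined function φ̃ : Ker P → lim¹_n π_{k+1}X_n. -/

import Mathlib

open scoped unitInterval Topology Topology.Homotopy

noncomputable section

/-- A map is a *Serre fibration* if it has the homotopy lifting property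
with respect to all cubes `I^k`. -/
def IsSerreFibration {E B : Type} [TopologicalSpace E] [TopologicalSpace B]
    (p : C(E, B)) : Prop :=
  ∀ (k : ℕ) (f : C((Fin k → I), E)) (H : C(I × (Fin k → I), B)),
    (∀ q, H (0, q) = p (f q)) →
      ∃ G : C(I × (Fin k → I), E),
        (∀ q, G (0, q) = f q) ∧ ∀ z, p (G z) = H z

/-- The inverse limit of a tower of spaces. -/
def TowerLim (X : ℕ → Type) [∀ n, TopologicalSpace (X n)]
    (p : ∀ n, C(X (n + 1), X n)) : Type :=
  { z : ∀ n, X n // ∀ n, p n (z (n + 1)) = z n }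

instance {X : ℕ → Type} [∀ n, TopologicalSpace (X n)] (p : ∀ n, C(X (n + 1), X n)) :
    TopologicalSpace (TowerLim X p) :=
  instTopologicalSpaceSubtype

/-- The projection from the inverse limit of a tower to the `n`th space. -/
def TowerLim.proj {X : ℕ → Type} [∀ n, TopologicalSpace (X n)]
    {p : ∀ n, C(X (n + 1), X n)} (n : ℕ) : C(TowerLim X p, X n) :=
  ⟨fun z => z.1 n, (continuous_apply n).comp continuous_subtype_val⟩

/-- The map induced on homotopy groups (in particular on `π_k` for `N = Fin k`)
by a continuous map `f` with `f x = y`. -/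
def piMap {X Y : Type} [TopologicalSpace X] [TopologicalSpace Y] (N : Type)
    (f : C(X, Y)) {x : X} {y : Y} (hf : f x = y) :
    HomotopyGroup N X x → HomotopyGroup N Y y :=
  Quotient.map
    (fun g => (⟨f.comp g.1, fun q hq => by
        rw [ContinuousMap.comp_apply, g.2 q hq, hf]⟩ : GenLoop N Y y))
    (fun g h H => H.map fun F => F.compContinuousMap f)


/-- The map `π_k (lim_n X_n) → π_k (X n)` induced by the projection `TowerLim.proj n`,
for the basepoint `⟨x, hx⟩` of the inverse limit. -/
def piProjMap {X : ℕ → Type} [∀ n, TopologicalSpace (X n)] {p : ∀ n, C(X (n + 1), X n)}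
    (k : ℕ) {x : ∀ n, X n} (hx : ∀ n, p n (x (n + 1)) = x n) (n : ℕ) :
    HomotopyGroup (Fin k) (TowerLim X p) (⟨x, hx⟩ : TowerLim X p) →
      HomotopyGroup (Fin k) (X n) (x n) :=
  piMap (Fin k) (TowerLim.proj n) rfl

/-- The map `π_k (X (n+1)) → π_k (X n)` induced by the map `p n` of the tower. -/
def piTowerMap {X : ℕ → Type} [∀ n, TopologicalSpace (X n)] {p : ∀ n, C(X (n + 1), X n)}
    (k : ℕ) {x : ∀ n, X n} (hx : ∀ n, p n (x (n + 1)) = x n) (n : ℕ) :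
    HomotopyGroup (Fin k) (X (n + 1)) (x (n + 1)) → HomotopyGroup (Fin k) (X n) (x n) :=
  piMap (Fin k) (p n) (hx n)

/-- The distinguished basepoint of `HomotopyGroup N X x`: the class of the constant map. -/
def piConst {X : Type} [TopologicalSpace X] (N : Type) (x : X) : HomotopyGroup N X x :=
  ⟦GenLoop.const⟧

/-- The class in `HomotopyGroup N X x` of a generalized loop. -/
def piCls {N X : Type} [TopologicalSpace X] {x : X} (g : GenLoop N X x) :
    HomotopyGroup N X x :=
  ⟦g⟧

/-- The generalized loop obtained by composing a generalized loop with a continuous map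
`f` satisfying `f x = y`. -/
def genLoopMap {X Y : Type} [TopologicalSpace X] [TopologicalSpace Y] (N : Type)
    (f : C(X, Y)) {x : X} {y : Y} (hf : f x = y) (g : GenLoop N X x) : GenLoop N Y y :=
  ⟨f.comp g.1, fun q hq => by rw [ContinuousMap.comp_apply, g.2 q hq, hf]⟩

/-- `β : I^{k+1} → X` is a *nullhomotopy* of the generalized loop `α : I^k → X`
(writing points of `I^{k+1}` as `(p, t)` with `t` the last coordinate):
`β (p, 0) = x` for all `p`, `β (p, 1) = α p` for all `p`, and `β (p, t) = x`
for all `p ∈ ∂I^k`. -/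
def IsNullhomotopy {k : ℕ} {X : Type} [TopologicalSpace X] {x : X}
    (α : GenLoop (Fin k) X x) (β : C((Fin (k + 1) → I), X)) : Prop :=
  (∀ q : Fin (k + 1) → I, q (Fin.last k) = 0 → β q = x) ∧
  (∀ q : Fin (k + 1) → I, q (Fin.last k) = 1 → β q = α fun i => q i.castSucc) ∧
  (∀ q : Fin (k + 1) → I, (∃ i : Fin k, q i.castSucc = 0 ∨ q i.castSucc = 1) → β q = x)

/-- `c = β * (f ∘ β'⁻¹)` : the concatenation, in the last coordinate of the cube `I^{k+1}`,
of `β` with the reverse (in the last coordinate) of `f ∘ β'`. -/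
def IsGluedWithReverse {k : ℕ} {X Y : Type} [TopologicalSpace X] [TopologicalSpace Y]
    (β : C((Fin (k + 1) → I), X)) (f : C(Y, X)) (β' : C((Fin (k + 1) → I), Y))
    (c : (Fin (k + 1) → I) → X) : Prop :=
  ∀ q : Fin (k + 1) → I, c q =
    if (q (Fin.last k) : ℝ) ≤ 1 / 2 then
      β (Function.update q (Fin.last k)
        (Set.projIcc 0 1 zero_le_one (2 * (q (Fin.last k) : ℝ))))
    else
      f (β' (Function.update q (Fin.last k)
        (Set.projIcc 0 1 zero_le_one (2 - 2 * (q (Fin.last k) : ℝ)))))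

/-!
In the loop space `Ω^k (X n)`, a nullhomotopy `β n` of `α_n` is a path from the constant loop to
`α_n`, and the `n`-th component of `φ(α)` is the loop `β n · (p ∘ β (n + 1))⁻¹`. A homotopy from `α`
to `ᾱ` gives a path `h n` from `α_n` to `ᾱ_n`, so that `g n = β̄ n · (h n)⁻¹ · (β n)⁻¹` is a loop.
As `h` comes from the inverse limit, `p ∘ h (n + 1) = h n`, and therefore in
`g n · φ(α) n · (p ∘ g (n + 1))⁻¹` everything cancels except `β̄ n · (p ∘ β̄ (n + 1))⁻¹`.
-/

section Path

variable {Y Z : Type*} [TopologicalSpace Y] [TopologicalSpace Z] {o a a' : Y}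

/-- The loop `B' · h⁻¹ · B⁻¹` obtained from paths `B` and `B'` issuing from the same point and a
path `h` joining their endpoints. For two nullhomotopies and a homotopy between the maps they
contract, it is the element whose `lim¹` action carries `φ(α)` to `φ(ᾱ)`. -/
def connectingLoop (B : Path o a) (B' : Path o a') (h : Path a a') : Path o o :=
  B'.trans (h.symm.trans B.symm)

theorem map_connectingLoop {o₁ a₁ a₁' : Z} {B : Path o a} {B' : Path o a'} {h : Path a a'}
    {B₁ : Path o₁ a₁} {B₁' : Path o₁ a₁'} {h₁ : Path a₁ a₁'} (F : Y → Z)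
    (hB : ∀ t, F (B t) = B₁ t) (hB' : ∀ t, F (B' t) = B₁' t) (hh : ∀ t, F (h t) = h₁ t) (t : I) :
    F (connectingLoop B B' h t) = connectingLoop B₁ B₁' h₁ t := by
  simp only [connectingLoop, Path.trans_apply, Path.symm_apply]
  split_ifs
  exacts [hB' _, hh _, hB _]

theorem trans_symm_homotopic_connectingLoop (B C : Path o a) (B' C' : Path o a')
    (h : Path a a') :
    (B'.trans C'.symm).Homotopic ((connectingLoop B B' h).trans
      ((B.trans C.symm).trans (connectingLoop C C' h).symm)) := by
  have symm_trans_cancel : ∀ {u v w : Y} (γ : Path.Homotopic.Quotient u v)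
      (δ : Path.Homotopic.Quotient v w), γ.symm.trans (γ.trans δ) = δ := fun γ δ => by
    rw [← Path.Homotopic.Quotient.trans_assoc, Path.Homotopic.Quotient.symm_trans,
      Path.Homotopic.Quotient.refl_trans]
  rw [← Path.Homotopic.Quotient.eq]
  simp only [connectingLoop, Path.Homotopic.Quotient.mk_trans, Path.Homotopic.Quotient.mk_symm,
    Path.trans_symm, Path.symm_symm, Path.Homotopic.Quotient.trans_assoc, symm_trans_cancel]

end Path

section GenLoop

variable {N : Type*} {X : Type*} [TopologicalSpace X] {x : X}

/-- A homotopy relative to the boundary of the cube, regarded as a path in the space of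
generalized loops. -/
def pathOfHomotopyRel {a b : GenLoop N X x} (H : a.1.HomotopyRel b.1 (Cube.boundary N)) :
    Path a b where
  toFun t := ⟨H.toContinuousMap.curry t, fun y hy => (H.eq_fst t hy).trans (a.2 y hy)⟩
  continuous_toFun := Continuous.subtype_mk (map_continuous _) _
  source' := by ext s; exact H.apply_zero s
  target' := by ext s; exact H.apply_one s

end GenLoop

section UncurryLast

variable {k : ℕ}

theorem update_last_eq_snoc_init {A : Type*} (q : Fin (k + 1) → A) (u : A) :
    Function.update q (Fin.last k) u = Fin.snoc (α := fun _ => A) (Fin.init q) u := by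
  rw [← Fin.snoc_init_self (Function.update q (Fin.last k) u), Fin.init_update_last,
    Function.update_self]

variable {X : Type*} [TopologicalSpace X] {x : X}

/-- The `(k+1)`-dimensional loop with time as its last coordinate that corresponds to a loop in
the space of `k`-dimensional loops. Unlike `GenLoop.fromLoop`, it is indexed by `Fin k` and not by
the subtype of the coordinates other than the last. -/
def uncurryLast (γ : Path (GenLoop.const : GenLoop (Fin k) X x) GenLoop.const) :
    GenLoop (Fin (k + 1)) X x :=
  ⟨⟨fun q => γ (q (Fin.last k)) (Fin.init q), by unfold Fin.init; fun_prop⟩, by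
    rintro q ⟨j, hj⟩
    induction j using Fin.lastCases with
    | last => rcases hj with hj | hj <;> simp [hj]
    | cast i => exact (γ (q (Fin.last k))).2 _ ⟨i, hj⟩⟩

theorem uncurryLast_apply (γ : Path (GenLoop.const : GenLoop (Fin k) X x) GenLoop.const)
    (q : Fin (k + 1) → I) : uncurryLast γ q = γ (q (Fin.last k)) (Fin.init q) :=
  rfl

theorem transAt_uncurryLast (γ δ : Path (GenLoop.const : GenLoop (Fin k) X x) GenLoop.const) :
    GenLoop.transAt (Fin.last k) (uncurryLast γ) (uncurryLast δ) = uncurryLast (γ.trans δ) := by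
  ext q
  rw [GenLoop.transAt, GenLoop.coe_copy, uncurryLast_apply (γ.trans δ), Path.trans_apply]
  simp only [uncurryLast_apply, Function.update_self, Fin.init_update_last]
  split_ifs <;> rw [Set.projIcc_of_mem]

theorem symmAt_uncurryLast (γ : Path (GenLoop.const : GenLoop (Fin k) X x) GenLoop.const) :
    GenLoop.symmAt (Fin.last k) (uncurryLast γ) = uncurryLast γ.symm := by
  ext q
  rw [GenLoop.symmAt, GenLoop.coe_copy, uncurryLast_apply, uncurryLast_apply, if_pos rfl,
    Path.symm_apply, Function.comp_apply]
  congr 1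
  funext i
  exact if_neg (Fin.castSucc_lt_last i).ne

theorem homotopic_uncurryLast {γ δ : Path (GenLoop.const : GenLoop (Fin k) X x) GenLoop.const}
    (h : γ.Homotopic δ) : GenLoop.Homotopic (uncurryLast γ) (uncurryLast δ) := by
  obtain ⟨H⟩ := h
  refine ⟨⟨⟨⟨fun z => uncurryLast (H.eval z.1) z.2, ?_⟩, fun q => ?_, fun q => ?_⟩, ?_⟩⟩
  · change Continuous fun z : I × (Fin (k + 1) → I) => H (z.1, z.2 (Fin.last k)) (Fin.init z.2)
    unfold Fin.init
    fun_prop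
  · exact congrArg (uncurryLast · q) H.eval_zero
  · exact congrArg (uncurryLast · q) H.eval_one
  · intro t q hq
    exact ((uncurryLast (H.eval t)).2 q hq).trans ((uncurryLast γ).2 q hq).symm

end UncurryLast

section HomotopyGroup

variable {k : ℕ} {X : Type} [TopologicalSpace X] {x : X}

theorem piCls_uncurryLast_mul
    (γ δ : Path (GenLoop.const : GenLoop (Fin k) X x) GenLoop.const) :
    piCls (uncurryLast γ) * piCls (uncurryLast δ) = piCls (uncurryLast (δ.trans γ)) :=
  HomotopyGroup.mul_spec.trans (congrArg piCls (transAt_uncurryLast δ γ))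

theorem piCls_uncurryLast_inv (γ : Path (GenLoop.const : GenLoop (Fin k) X x) GenLoop.const) :
    (piCls (uncurryLast γ))⁻¹ = piCls (uncurryLast γ.symm) :=
  HomotopyGroup.inv_spec.trans (congrArg piCls (symmAt_uncurryLast γ))

theorem piCls_uncurryLast_trans_symm {a a' : GenLoop (Fin k) X x} (B C : Path GenLoop.const a)
    (B' C' : Path GenLoop.const a') (h : Path a a') :
    piCls (uncurryLast (B'.trans C'.symm))
      = (piCls (uncurryLast (connectingLoop C C' h)))⁻¹ * piCls (uncurryLast (B.trans C.symm))
        * piCls (uncurryLast (connectingLoop B B' h)) := by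
  rw [piCls_uncurryLast_inv, piCls_uncurryLast_mul, piCls_uncurryLast_mul]
  exact Quotient.sound (homotopic_uncurryLast (trans_symm_homotopic_connectingLoop B C B' C' h))

end HomotopyGroup

section GenLoopMap

variable {X Y : Type} [TopologicalSpace X] [TopologicalSpace Y] {x : X} {y : Y}

theorem continuous_genLoopMap (N : Type) (f : C(X, Y)) (hf : f x = y) :
    Continuous (genLoopMap N f hf) :=
  ((ContinuousMap.continuous_postcomp f).comp continuous_subtype_val).subtype_mk _

theorem genLoopMap_uncurryLast {k : ℕ} (f : C(X, Y)) (hf : f x = y)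
    {γ : Path (GenLoop.const : GenLoop (Fin k) X x) GenLoop.const}
    {δ : Path (GenLoop.const : GenLoop (Fin k) Y y) GenLoop.const}
    (h : ∀ t, genLoopMap (Fin k) f hf (γ t) = δ t) :
    genLoopMap (Fin (k + 1)) f hf (uncurryLast γ) = uncurryLast δ := by
  ext q
  exact DFunLike.congr_fun (h (q (Fin.last k))) (Fin.init q)

end GenLoopMap

section Nullhomotopy

variable {k : ℕ} {X Y : Type} [TopologicalSpace X] [TopologicalSpace Y] {x : X} {y : Y}
  {α : GenLoop (Fin k) X x} {β : C((Fin (k + 1) → I), X)}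

/-- A nullhomotopy of `α`, regarded as a homotopy relative to the boundary from the constant loop
to `α`, with the last coordinate of the cube as time. -/
def IsNullhomotopy.homotopyRel (hβ : IsNullhomotopy α β) :
    (GenLoop.const : GenLoop (Fin k) X x).1.HomotopyRel α.1 (Cube.boundary (Fin k)) where
  toFun z := β (Fin.snoc (α := fun _ => I) z.2 z.1)
  continuous_toFun := by fun_prop
  map_zero_left s := hβ.1 _ (Fin.snoc_last _ _)
  map_one_left s :=
    (hβ.2.1 _ (Fin.snoc_last _ _)).trans (congrArg α (Fin.init_snoc (α := fun _ => I) 1 s))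
  prop' t s := fun ⟨i, hi⟩ => hβ.2.2 _ ⟨i, by simpa only [Fin.snoc_castSucc] using hi⟩

/-- A nullhomotopy of `α`, regarded as a path from the constant loop to `α` in the space of
generalized loops. -/
def IsNullhomotopy.path (hβ : IsNullhomotopy α β) : Path GenLoop.const α :=
  pathOfHomotopyRel hβ.homotopyRel

theorem IsNullhomotopy.path_apply (hβ : IsNullhomotopy α β) (t : I) (s : Fin k → I) :
    hβ.path t s = β (Fin.snoc (α := fun _ => I) s t) :=
  rfl

theorem IsNullhomotopy.map (hβ : IsNullhomotopy α β) (f : C(X, Y)) (hf : f x = y) :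
    IsNullhomotopy (genLoopMap (Fin k) f hf α) (f.comp β) :=
  ⟨fun q hq => (congrArg f (hβ.1 q hq)).trans hf, fun q hq => congrArg f (hβ.2.1 q hq),
    fun q hq => (congrArg f (hβ.2.2 q hq)).trans hf⟩

theorem IsGluedWithReverse.eq_uncurryLast {f : C(Y, X)} {β' : C((Fin (k + 1) → I), Y)}
    {c : GenLoop (Fin (k + 1)) X x} (hc : IsGluedWithReverse β f β' c)
    (hβ : IsNullhomotopy α β) (hβ' : IsNullhomotopy α (f.comp β')) :
    c = uncurryLast (hβ.path.trans hβ'.path.symm) := by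
  ext q
  rw [hc q, uncurryLast_apply, Path.trans_apply]
  split_ifs with hq
  · rw [update_last_eq_snoc_init, IsNullhomotopy.path_apply, Set.projIcc_of_mem]
  · have reverse_time (h : 2 * (q (Fin.last k) : ℝ) - 1 ∈ I) :
        Set.projIcc 0 1 zero_le_one (2 - 2 * (q (Fin.last k) : ℝ)) = σ ⟨_, h⟩ := by
      rw [Set.projIcc_of_mem zero_le_one ⟨by linarith [h.2], by linarith [h.1]⟩]
      exact Subtype.ext (by rw [unitInterval.coe_symm_eq]; ring)
    rw [update_last_eq_snoc_init, Path.symm_apply, Function.comp_apply, IsNullhomotopy.path_apply,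
      ContinuousMap.comp_apply, reverse_time]

end Nullhomotopy

section Tower

variable {X : ℕ → Type} [∀ n, TopologicalSpace (X n)] {p : ∀ n, C(X (n + 1), X n)}
  {x : ∀ n, X n}

theorem piTowerMap_piCls (k : ℕ) (hx : ∀ n, p n (x (n + 1)) = x n) (n : ℕ)
    (a : GenLoop (Fin k) (X (n + 1)) (x (n + 1))) :
    piTowerMap k hx n (piCls a) = piCls (genLoopMap (Fin k) (p n) (hx n) a) :=
  rfl

theorem genLoopMap_proj_succ (N : Type) (hx : ∀ n, p n (x (n + 1)) = x n) (n : ℕ)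
    (a : GenLoop N (TowerLim X p) (⟨x, hx⟩ : TowerLim X p)) :
    genLoopMap N (p n) (hx n) (genLoopMap N (TowerLim.proj (n + 1)) rfl a)
      = genLoopMap N (TowerLim.proj n) rfl a := by
  ext s
  exact (a.1 s).2 n

theorem phi_eq_of_homotopic_general (hx : ∀ n, p n (x (n + 1)) = x n) {k : ℕ}
    {α α' : GenLoop (Fin k) (TowerLim X p) (⟨x, hx⟩ : TowerLim X p)}
    (hhom : GenLoop.Homotopic α α')
    {β β' : ∀ n, C((Fin (k + 1) → I), X n)}
    (hβ : ∀ n, IsNullhomotopy (genLoopMap (Fin k) (TowerLim.proj n) rfl α) (β n))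
    (hβ' : ∀ n, IsNullhomotopy (genLoopMap (Fin k) (TowerLim.proj n) rfl α') (β' n))
    {c c' : ∀ n, GenLoop (Fin (k + 1)) (X n) (x n)}
    (hc : ∀ n, IsGluedWithReverse (β n) (p n) (β (n + 1)) (c n))
    (hc' : ∀ n, IsGluedWithReverse (β' n) (p n) (β' (n + 1)) (c' n)) :
    ∃ g : ∀ n, HomotopyGroup (Fin (k + 1)) (X n) (x n),
      ∀ n, piCls (c' n)
        = (piTowerMap (k + 1) hx n (g (n + 1)))⁻¹ * piCls (c n) * g n := by
  obtain ⟨H⟩ := hhom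
  let h n : Path (genLoopMap (Fin k) (TowerLim.proj n) rfl α : GenLoop (Fin k) (X n) (x n))
      (genLoopMap (Fin k) (TowerLim.proj n) rfl α') :=
    (pathOfHomotopyRel H).map (continuous_genLoopMap (Fin k) (TowerLim.proj n) rfl)
  let γ n := connectingLoop (hβ n).path (hβ' n).path (h n)
  refine ⟨fun n => piCls (uncurryLast (γ n)), fun n => ?_⟩
  have hpβ : IsNullhomotopy (genLoopMap (Fin k) (TowerLim.proj n) rfl α)
      ((p n).comp (β (n + 1))) :=
    genLoopMap_proj_succ (Fin k) hx n α ▸ (hβ (n + 1)).map (p n) (hx n)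
  have hpβ' : IsNullhomotopy (genLoopMap (Fin k) (TowerLim.proj n) rfl α')
      ((p n).comp (β' (n + 1))) :=
    genLoopMap_proj_succ (Fin k) hx n α' ▸ (hβ' (n + 1)).map (p n) (hx n)
  have hpγ : genLoopMap (Fin (k + 1)) (p n) (hx n) (uncurryLast (γ (n + 1)))
      = uncurryLast (connectingLoop hpβ.path hpβ'.path (h n)) :=
    genLoopMap_uncurryLast (p n) (hx n) <| map_connectingLoop _ (fun _ => rfl) (fun _ => rfl)
      fun _ => genLoopMap_proj_succ (Fin k) hx n _
  rw [piTowerMap_piCls, hpγ, (hc n).eq_uncurryLast (hβ n) hpβ,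
    (hc' n).eq_uncurryLast (hβ' n) hpβ']
  exact piCls_uncurryLast_trans_symm _ _ _ _ (h n)

end Tower

/-- **Proposition 4.4 (`φ` descends to homotopy classes).**  Let `(X n, p n)` be a tower of
fibrations of pointed topological spaces, with basepoints the components `x n` of a chosen
point of the inverse limit, let `k ≥ 0`, and let `α, ᾱ : I^k → lim_n X_n` be maps sending
`∂I^k` to the basepoint whose classes lie in the kernel of
`P : π_k (lim_n X_n) → lim_n π_k X_n`.  If `α` and `ᾱ` are homotopic relative to `∂I^k`,
then `φ(α) = φ(ᾱ)` in `lim¹_n π_{k+1} X_n`: for any choices of families of nullhomotopies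
`β` of the `α_n = P_n ∘ α` and `β̄` of the `ᾱ_n = P_n ∘ ᾱ`, the families
`([β_n * (p_{n+1} ∘ β_{n+1}⁻¹)])_n` and `([β̄_n * (p_{n+1} ∘ β̄_{n+1}⁻¹)])_n` lie in the same
orbit of the `lim¹` action; hence `φ` induces a well-defined function
`φ̃ : Ker P → lim¹_n π_{k+1} X_n`.  (The orbit relation `h' = g · h · ((p_{n+1})_* g)⁻¹`,
written with homotopy classes composed in the order of concatenation of cubes, reads
`(πp (g (n+1)))⁻¹ * h n * g n` in Mathlib's multiplication, which composes in the opposite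
order.) -/
theorem phi_eq_of_homotopic
    (X : ℕ → Type) [∀ n, TopologicalSpace (X n)] (p : ∀ n, C(X (n + 1), X n))
    (hfib : ∀ n, IsSerreFibration (p n))
    (x : ∀ n, X n) (hx : ∀ n, p n (x (n + 1)) = x n)
    (k : ℕ)
    (α α' : GenLoop (Fin k) (TowerLim X p) (⟨x, hx⟩ : TowerLim X p))
    (hker : ∀ n, piProjMap k hx n (piCls α) = piConst (Fin k) (x n))
    (hker' : ∀ n, piProjMap k hx n (piCls α') = piConst (Fin k) (x n))
    (hhom : GenLoop.Homotopic α α')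
    (β β' : ∀ n, C((Fin (k + 1) → I), X n))
    (hβ : ∀ n, IsNullhomotopy (genLoopMap (Fin k) (TowerLim.proj n) rfl α) (β n))
    (hβ' : ∀ n, IsNullhomotopy (genLoopMap (Fin k) (TowerLim.proj n) rfl α') (β' n))
    (c c' : ∀ n, GenLoop (Fin (k + 1)) (X n) (x n))
    (hc : ∀ n, IsGluedWithReverse (β n) (p n) (β (n + 1)) (c n))
    (hc' : ∀ n, IsGluedWithReverse (β' n) (p n) (β' (n + 1)) (c' n)) :
    ∃ g : ∀ n, HomotopyGroup (Fin (k + 1)) (X n) (x n),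
      ∀ n, piCls (c' n)
        = (piTowerMap (k + 1) hx n (g (n + 1)))⁻¹ * piCls (c n) * g n :=
  phi_eq_of_homotopic_general hx hhom hβ hβ' hc hc'

end
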